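/- (Theorem 1, part 1: limiting acceptance probability.) For each dimension d, let π^(d) be an everywhere-positive probability density on ℝ^d whose logarithm L^(d) = log π^(d) is twice continuously differentiable, with Hessian H^(d)(x) = [∂²_{ij} L^(d)(x)]. Let X^(d) ∼ π^(d), let Z^(d) ∼ N(0, I_d) be independent of X^(d), and let B be a real random variable, independent of (X^(d), Z^(d)) and with the same distribution for every d, having a Lebesgue density ρ satisfying ρ(b) = e^{−b} ρ(−b). Suppose there exist constants s^(d) > 0 such that, as d → ∞, (i) ‖∇L^(d)(X^(d))‖ / s^(d) → 1 in probability, (ii) ΔL^(d)(X^(d)) / (s^(d))² → −1 in probability, (iii) Trace[(H^(d)(X^(d)))²] / (s^(d))⁴ → 0 in probability, and (iv) for every σ > 0 and ε > 0, P( sup_{t∈(0,1)} | ⟨Z^(d), [H^(d)(X^(d) + t σ Z^(d)/s^(d)) − H^(d)(X^(d))] Z^(d)⟩ | / (s^(d))² > ε ) → 0. Fix ℓ > 0 and set λ^(d) = ℓ / s^(d). Then the mean acceptance probability α^(d)(ℓ) := E[ min(1, exp( L^(d)(X^(d) + λ^(d) Z^(d)) − L^(d)(X^(d)) + B )) ]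 converges, as d → ∞, to α(ℓ) := 2 · E[Φ(B/ℓ − ℓ/2)], where Φ is the standard normal cumulative distribution function. -/

import Mathlib

open MeasureTheory ProbabilityTheory Real Filter Topology

/-- The standard normal cumulative distribution function `Φ`. -/
noncomputable def stdNormalCDF (x : ℝ) : ℝ :=
  ∫ t in Set.Iic x, Real.exp (-t ^ 2 / 2) / Real.sqrt (2 * Real.pi)

/-- The standard Gaussian measure `N(0, I_d)` on `ℝ^d`. -/
noncomputable def stdGaussian (d : ℕ) : Measure (Fin d → ℝ) :=
  Measure.pi fun _ : Fin d => gaussianReal 0 1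

/-- The Hessian matrix `H(x) = [∂²_{ij} L(x)]` of a function `L` on `ℝ^d`. -/
noncomputable def hessian {d : ℕ} (L : (Fin d → ℝ) → ℝ) (x : Fin d → ℝ) :
    Matrix (Fin d) (Fin d) ℝ := fun i j =>
  fderiv ℝ (fun y => fderiv ℝ L y (Pi.single j 1)) x (Pi.single i 1)

/-- The squared Euclidean norm of the gradient of `L` at `x`, `‖∇L(x)‖²`. -/
noncomputable def gradNormSq {d : ℕ} (L : (Fin d → ℝ) → ℝ) (x : Fin d → ℝ) : ℝ :=
  ∑ i, (fderiv ℝ L x (Pi.single i 1)) ^ 2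

/-! A second-order Taylor expansion writes the log ratio `L (X + (ℓ/s) Z) - L X` as
`(ℓ/s) ⟨∇L(X), Z⟩ + (ℓ²/2) ⟨Z, H(X) Z⟩ / s²` up to an error that (iv) makes negligible. Given `X`,
the quadratic form has mean `ΔL(X) / s²` and variance proportional to `Trace[H(X)²] / s⁴`, so by
Chebyshev's inequality, (ii) and (iii) it tends to `-1` in probability; the linear term is a centred
Gaussian with standard deviation `ℓ ‖∇L(X)‖ / s → ℓ`. Hence the log ratio converges in
distribution to `W ∼ N(-ℓ²/2, ℓ²)`.

The laws of `W` and of `B` both satisfy detailed balance: the law of `-T` has density `e^t` with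
respect to the law of `T`. This property is stable under convolution, so it holds for `T = W + B`,
and it gives `E[min(1, e^T)] = P(T ≥ 0) + P(T > 0) = 2 P(W ≥ -B) = 2 E[Φ(B/ℓ - ℓ/2)]`. -/

section ConvergenceInProbability

variable {ι E F : Type*} {Ω Ω' : ι → Type*} [∀ i, MeasurableSpace (Ω i)]
  [∀ i, MeasurableSpace (Ω' i)] [PseudoMetricSpace E] [PseudoMetricSpace F] {l : Filter ι}

/-- Convergence in probability of `f i` to the constant `c`. Unlike in `TendstoInMeasure`, the
probability space may vary with `i`, as it does for a sequence of models of growing dimension. -/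
def TendstoInProb (P : ∀ i, Measure (Ω i)) (f : ∀ i, Ω i → E) (l : Filter ι) (c : E) : Prop :=
  ∀ ε > (0 : ℝ), Tendsto (fun i => P i {ω | ε < dist (f i ω) c}) l (𝓝 0)

namespace TendstoInProb

variable {P : ∀ i, Measure (Ω i)} {f : ∀ i, Ω i → E} {c : E}

theorem of_dist_le {g : ∀ i, Ω i → F} {c' : F} (hf : TendstoInProb P f l c)
    (hgf : ∀ i ω, dist (g i ω) c' ≤ dist (f i ω) c) : TendstoInProb P g l c' := fun ε hε =>
  tendsto_of_tendsto_of_tendsto_of_le_of_le tendsto_const_nhds (hf ε hε)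
    (fun _ => zero_le) (fun i => measure_mono fun ω (hω : ε < _) => hω.trans_le (hgf i ω))

theorem comp_continuousAt {g : E → F} (hf : TendstoInProb P f l c) (hg : ContinuousAt g c) :
    TendstoInProb P (fun i ω => g (f i ω)) l (g c) := by
  intro ε hε
  obtain ⟨δ, hδ, hgδ⟩ := Metric.continuousAt_iff.1 hg ε hε
  refine tendsto_of_tendsto_of_tendsto_of_le_of_le tendsto_const_nhds (hf (δ / 2) (half_pos hδ))
    (fun _ => zero_le) (fun i => measure_mono fun ω (hω : ε < _) => ?_)
  by_contra hfω
  exact hω.not_gt (hgδ ((not_lt.1 hfω).trans_lt (half_lt_self hδ)))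

theorem add {f g : ∀ i, Ω i → ℝ} {a b : ℝ} (hf : TendstoInProb P f l a)
    (hg : TendstoInProb P g l b) : TendstoInProb P (fun i ω => f i ω + g i ω) l (a + b) := by
  intro ε hε
  have hsum := (hf (ε / 2) (half_pos hε)).add (hg (ε / 2) (half_pos hε))
  rw [add_zero] at hsum
  refine tendsto_of_tendsto_of_tendsto_of_le_of_le tendsto_const_nhds hsum (fun _ => zero_le)
    (fun i => (measure_mono fun ω (hω : ε < _) => ?_).trans (measure_union_le _ _))
  by_contra hfg
  have hfa : dist (f i ω) a ≤ ε / 2 := not_lt.1 fun h => hfg (Or.inl h)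
  have hgb : dist (g i ω) b ≤ ε / 2 := not_lt.1 fun h => hfg (Or.inr h)
  linarith [dist_add_add_le (f i ω) (g i ω) a b]

theorem comp_fst (Q : ∀ i, Measure (Ω' i)) [∀ i, IsProbabilityMeasure (Q i)]
    (hf : TendstoInProb P f l c) :
    TendstoInProb (fun i => (P i).prod (Q i)) (fun i p => f i p.1) l c := by
  intro ε hε
  refine (hf ε hε).congr fun i => ?_
  have hcyl : {p : Ω i × Ω' i | ε < dist (f i p.1) c} = {ω | ε < dist (f i ω) c} ×ˢ Set.univ := by
    ext p
    simp
  rw [hcyl, Measure.prod_prod, measure_univ, mul_one]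

theorem tendsto_lintegral_min_dist [∀ i, IsProbabilityMeasure (P i)]
    (hf : TendstoInProb P f l c) (C : ℝ) :
    Tendsto (fun i => ∫⁻ ω, ENNReal.ofReal (min C (dist (f i ω) c)) ∂P i) l (𝓝 0) := by
  refine ENNReal.tendsto_nhds_zero.2 fun δ hδ => ?_
  obtain ⟨ε, hε, hεδ⟩ : ∃ ε > (0 : ℝ), ENNReal.ofReal ε ≤ δ / 2 := by
    obtain ⟨r, hr, hrδ⟩ := ENNReal.lt_iff_exists_nnreal_btwn.1 (ENNReal.half_pos hδ.ne')
    exact ⟨r, by exact_mod_cast hr, by simpa using hrδ.le⟩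
  have htail : Tendsto (fun i => ENNReal.ofReal C * P i {ω | ε < dist (f i ω) c}) l (𝓝 0) := by
    simpa using ENNReal.Tendsto.const_mul (hf ε hε) (Or.inr ENNReal.ofReal_ne_top)
  filter_upwards [ENNReal.tendsto_nhds_zero.1 htail (δ / 2) (ENNReal.half_pos hδ.ne')] with i hi
  have hsplit (ω : Ω i) : ENNReal.ofReal (min C (dist (f i ω) c)) ≤ ENNReal.ofReal ε +
      {ω | ε < dist (f i ω) c}.indicator (fun _ => ENNReal.ofReal C) ω := by
    by_cases hω : ε < dist (f i ω) c
    · rw [Set.indicator_of_mem (by exact hω)]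
      exact le_add_left (ENNReal.ofReal_le_ofReal (min_le_left _ _))
    · exact le_add_right (ENNReal.ofReal_le_ofReal ((min_le_right _ _).trans (not_lt.1 hω)))
  calc ∫⁻ ω, ENNReal.ofReal (min C (dist (f i ω) c)) ∂P i
      ≤ ENNReal.ofReal ε + ∫⁻ ω, {ω | ε < dist (f i ω) c}.indicator
          (fun _ => ENNReal.ofReal C) ω ∂P i := by
        refine (lintegral_mono hsplit).trans_eq ?_
        rw [lintegral_add_left measurable_const, lintegral_const, measure_univ, mul_one]
    _ ≤ δ / 2 + δ / 2 := add_le_add hεδ ((lintegral_indicator_const_le _ _).trans hi)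
    _ = δ := ENNReal.add_halves δ

theorem tendsto_integral_of_norm_le [∀ i, IsProbabilityMeasure (P i)] {f : ∀ i, Ω i → ℝ} {c C : ℝ}
    (hf : TendstoInProb P f l c) (hfm : ∀ i, AEStronglyMeasurable (f i) (P i))
    (hfC : ∀ i ω, ‖f i ω‖ ≤ C) : Tendsto (fun i => ∫ ω, f i ω ∂P i) l (𝓝 c) := by
  rw [tendsto_iff_edist_tendsto_0]
  refine tendsto_of_tendsto_of_tendsto_of_le_of_le tendsto_const_nhds
    (hf.tendsto_lintegral_min_dist (C + ‖c‖)) (fun _ => zero_le) (fun i => ?_)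
  have hint : Integrable (f i) (P i) := .of_bound (hfm i) C (.of_forall (hfC i))
  calc edist (∫ ω, f i ω ∂P i) c = ‖∫ ω, (f i ω - c) ∂P i‖ₑ := by
        rw [integral_sub hint (integrable_const c), integral_const, probReal_univ, one_smul,
          edist_eq_enorm_sub]
    _ ≤ ∫⁻ ω, ‖f i ω - c‖ₑ ∂P i := enorm_integral_le_lintegral_enorm _
    _ = ∫⁻ ω, ENNReal.ofReal (min (C + ‖c‖) (dist (f i ω) c)) ∂P i := by
        refine lintegral_congr fun ω => ?_
        rw [min_eq_right ((dist_eq_norm _ _).trans_le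
          ((norm_sub_le _ _).trans (add_le_add_left (hfC i ω) _))), dist_eq_norm, ofReal_norm]

end TendstoInProb

theorem tendstoInProb_zero_iff_of_nonneg {P : ∀ i, Measure (Ω i)} {f : ∀ i, Ω i → ℝ}
    (hf : ∀ i ω, 0 ≤ f i ω) :
    TendstoInProb P f l 0 ↔ ∀ ε > 0, Tendsto (fun i => P i {ω | ε < f i ω}) l (𝓝 0) := by
  simp only [TendstoInProb, Real.dist_0_eq_abs, abs_of_nonneg (hf _ _)]

theorem tendstoInProb_sub_integral_of_variance {μ : ∀ i, Measure (Ω i)} {ν : ∀ i, Measure (Ω' i)}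
    [∀ i, IsProbabilityMeasure (μ i)] [∀ i, IsProbabilityMeasure (ν i)]
    {f : ∀ i, Ω i → Ω' i → ℝ} (hfm : ∀ i, Measurable (Function.uncurry (f i)))
    (hf : ∀ i x, MemLp (f i x) 2 (ν i))
    (hvar : TendstoInProb μ (fun i x => Var[f i x; ν i]) l 0) :
    TendstoInProb (fun i => (μ i).prod (ν i))
      (fun i p => f i p.1 p.2 - ∫ y, f i p.1 y ∂ν i) l 0 := by
  intro ε hε
  have hvar' :=
    (hvar.comp_continuousAt (g := (· / ε ^ 2)) (by fun_prop)).tendsto_lintegral_min_dist 1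
  simp only [zero_div, dist_zero_right] at hvar' ⊢
  refine tendsto_of_tendsto_of_tendsto_of_le_of_le tendsto_const_nhds hvar'
    (fun _ => zero_le) (fun i => ?_)
  have hmean : Measurable fun x => ∫ y, f i x y ∂ν i :=
    (hfm i).stronglyMeasurable.integral_prod_right.measurable
  have hset : MeasurableSet {p : Ω i × Ω' i | ε < ‖f i p.1 p.2 - ∫ y, f i p.1 y ∂ν i‖} :=
    measurableSet_lt measurable_const ((hfm i).sub (hmean.comp measurable_fst)).norm
  refine (Measure.prod_apply hset).trans_le (lintegral_mono fun x => ?_)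
  have hcheb : ν i {y | ε ≤ |f i x y - ∫ y, f i x y ∂ν i|} ≤
      ENNReal.ofReal (Var[f i x; ν i] / ε ^ 2) := meas_ge_le_variance_div_sq (hf i x) hε
  rw [ENNReal.ofReal_min, ENNReal.ofReal_one]
  refine le_min prob_le_one ((measure_mono fun y (hy : ε < _) => ?_).trans
    (hcheb.trans (ENNReal.ofReal_le_ofReal (le_abs_self _))))
  exact hy.le

end ConvergenceInProbability

section ConvergenceInDistribution

variable {ι E Ω' : Type*} {Ω : ι → Type*} [∀ i, MeasurableSpace (Ω i)] [MeasurableSpace Ω']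
  [MeasurableSpace E] {l : Filter ι} {P : ∀ i, Measure (Ω i)} [∀ i, IsProbabilityMeasure (P i)]
  {P' : Measure Ω'} [IsProbabilityMeasure P'] {X Y : ∀ i, Ω i → E} {Z : Ω' → E}

open scoped BoundedContinuousFunction

theorem tendstoInDistribution_iff_tendsto_integral [TopologicalSpace E] [OpensMeasurableSpace E]
    (hX : ∀ i, AEMeasurable (X i) (P i)) (hZ : AEMeasurable Z P') :
    TendstoInDistribution X l Z P P' ↔ ∀ g : E →ᵇ ℝ,
      Tendsto (fun i => ∫ ω, g (X i ω) ∂P i) l (𝓝 (∫ ω, g (Z ω) ∂P')) := by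
  have hgX (g : E →ᵇ ℝ) (i : ι) : ∫ ω, g (X i ω) ∂P i = ∫ x, g x ∂(P i).map (X i) :=
    (integral_map (hX i) g.continuous.aestronglyMeasurable).symm
  have hgZ (g : E →ᵇ ℝ) : ∫ ω, g (Z ω) ∂P' = ∫ x, g x ∂P'.map Z :=
    (integral_map hZ g.continuous.aestronglyMeasurable).symm
  simp only [hgX, hgZ]
  exact ⟨fun h => ProbabilityMeasure.tendsto_iff_forall_integral_tendsto.1 h.tendsto,
    fun h => ⟨hX, hZ, ProbabilityMeasure.tendsto_iff_forall_integral_tendsto.2 h⟩⟩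

theorem tendsto_integral_comp_sub_of_lipschitzWith [PseudoMetricSpace E]
    [OpensMeasurableSpace E] (hX : ∀ i, AEMeasurable (X i) (P i))
    (hY : ∀ i, AEMeasurable (Y i) (P i))
    (hXY : TendstoInProb P (fun i ω => dist (X i ω) (Y i ω)) l 0) (g : E →ᵇ ℝ) {K : NNReal}
    (hg : LipschitzWith K g) :
    Tendsto (fun i => ∫ ω, g (X i ω) ∂P i - ∫ ω, g (Y i ω) ∂P i) l (𝓝 0) := by
  have hgm {i} {V : Ω i → E} (hV : AEMeasurable V (P i)) :
      AEStronglyMeasurable (fun ω => g (V ω)) (P i) :=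
    (g.continuous.measurable.comp_aemeasurable hV).aestronglyMeasurable
  have hgint {i} {V : Ω i → E} (hV : AEMeasurable V (P i)) :
      Integrable (fun ω => g (V ω)) (P i) :=
    .of_bound (hgm hV) ‖g‖ (.of_forall fun ω => g.norm_coe_le_norm (V ω))
  simp only [← integral_sub (hgint (hX _)) (hgint (hY _))]
  have hKXY := hXY.comp_continuousAt (continuous_const_mul (K : ℝ)).continuousAt
  have hgXY : TendstoInProb P (fun i ω => g (X i ω) - g (Y i ω)) l 0 := by
    refine hKXY.of_dist_le fun i ω => ?_
    rw [dist_zero_right, mul_zero, dist_zero_right, ← dist_eq_norm]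
    exact (hg.dist_le_mul _ _).trans (le_abs_self _)
  exact hgXY.tendsto_integral_of_norm_le (fun i => (hgm (hX i)).sub (hgm (hY i)))
    (fun i ω => (dist_eq_norm _ _).symm.trans_le (g.dist_le_two_norm _ _))

theorem tendstoInDistribution_of_tendstoInProb_dist [PseudoMetricSpace E] [OpensMeasurableSpace E]
    [l.IsCountablyGenerated] (hY : TendstoInDistribution Y l Z P P')
    (hX : ∀ i, AEMeasurable (X i) (P i))
    (hXY : TendstoInProb P (fun i ω => dist (X i ω) (Y i ω)) l 0) :
    TendstoInDistribution X l Z P P' := by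
  have hYm := hY.forall_aemeasurable
  refine ⟨hX, hY.aemeasurable_limit, tendsto_iff_forall_lipschitz_integral_tendsto.2 ?_⟩
  rintro f ⟨C, hfC⟩ ⟨K, hfK⟩
  let g : E →ᵇ ℝ := ⟨⟨f, hfK.continuous⟩, C, hfC⟩
  have hmapX (i : ι) : ∫ x, f x ∂(P i).map (X i) = ∫ ω, g (X i ω) ∂P i :=
    integral_map (hX i) hfK.continuous.aestronglyMeasurable
  have hmapZ : ∫ x, f x ∂P'.map Z = ∫ ω, g (Z ω) ∂P' :=
    integral_map hY.aemeasurable_limit hfK.continuous.aestronglyMeasurable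
  have hgY : Tendsto (fun i => ∫ ω, g (Y i ω) ∂P i) l (𝓝 (∫ ω, g (Z ω) ∂P')) :=
    (tendstoInDistribution_iff_tendsto_integral hYm hY.aemeasurable_limit).1 hY g
  have hgX : Tendsto (fun i => ∫ ω, g (X i ω) ∂P i) l (𝓝 (∫ ω, g (Z ω) ∂P')) := by
    simpa using (tendsto_integral_comp_sub_of_lipschitzWith hX hYm hXY g hfK).add hgY
  simpa only [ProbabilityMeasure.coe_mk, hmapX, hmapZ] using hgX

end ConvergenceInDistribution

section StandardGaussian

open Matrix
open scoped BoundedContinuousFunction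

variable {d : ℕ}

instance : IsProbabilityMeasure (_root_.stdGaussian d) :=
  inferInstanceAs (IsProbabilityMeasure (Measure.pi _))

theorem map_toLp_stdGaussian : (_root_.stdGaussian d).map (WithLp.toLp 2) =
    ProbabilityTheory.stdGaussian (EuclideanSpace ℝ (Fin d)) := map_pi_eq_stdGaussian

theorem map_dotProduct_stdGaussian (a : Fin d → ℝ) :
    (_root_.stdGaussian d).map (a ⬝ᵥ ·) = (gaussianReal 0 1).map (√(a ⬝ᵥ a) * ·) := by
  let A : StrongDual ℝ (EuclideanSpace ℝ (Fin d)) := innerSL ℝ (WithLp.toLp 2 a)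
  have hA : (a ⬝ᵥ ·) = A ∘ WithLp.toLp 2 := by
    ext z
    simp [A, EuclideanSpace.inner_toLp_toLp, dotProduct_comm]
  have hnorm : ‖A‖ = √(a ⬝ᵥ a) := by
    simp [A, innerSL_apply_norm, EuclideanSpace.norm_eq, dotProduct, sq]
  rw [hA, ← Measure.map_map (by fun_prop) (by fun_prop), map_toLp_stdGaussian,
    IsGaussian.map_eq_gaussianReal, integral_strongDual_stdGaussian, variance_dual_stdGaussian,
    gaussianReal_map_const_mul, hnorm, mul_zero, mul_one, Real.toNNReal_of_nonneg (sq_nonneg _)]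

theorem dotProduct_mulVec_sum_eigenvectorBasis {M : Matrix (Fin d) (Fin d) ℝ}
    (hM : M.IsHermitian) (x : Fin d → ℝ) :
    (∑ i, x i • hM.eigenvectorBasis i).ofLp ⬝ᵥ M *ᵥ (∑ i, x i • hM.eigenvectorBasis i).ofLp =
      ∑ i, hM.eigenvalues i * x i ^ 2 := by
  have hMv : M *ᵥ (∑ i, x i • hM.eigenvectorBasis i).ofLp =
      (∑ i, (x i * hM.eigenvalues i) • hM.eigenvectorBasis i).ofLp := by
    simp only [WithLp.ofLp_sum, WithLp.ofLp_smul, Matrix.mulVec_sum, Matrix.mulVec_smul,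
      hM.mulVec_eigenvectorBasis, smul_smul]
  have hinner := hM.eigenvectorBasis.orthonormal.inner_sum x (fun i => x i * hM.eigenvalues i)
    Finset.univ
  rw [EuclideanSpace.inner_eq_star_dotProduct, star_trivial] at hinner
  rw [hMv, dotProduct_comm, hinner]
  exact Finset.sum_congr rfl fun i _ => by rw [conj_trivial]; ring

theorem identDistrib_dotProduct_mulVec_stdGaussian {M : Matrix (Fin d) (Fin d) ℝ}
    (hM : M.IsHermitian) :
    IdentDistrib (fun z => z ⬝ᵥ M *ᵥ z) (fun x => ∑ i, hM.eigenvalues i * x i ^ 2)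
      (_root_.stdGaussian d) (_root_.stdGaussian d) := by
  let q : EuclideanSpace ℝ (Fin d) → ℝ := fun v => v.ofLp ⬝ᵥ M *ᵥ v.ofLp
  have hq : Continuous q := by fun_prop
  have hsum : Continuous fun x : Fin d → ℝ => ∑ i, x i • hM.eigenvectorBasis i := by fun_prop
  have hrot : (_root_.stdGaussian d).map (WithLp.toLp 2) =
      (_root_.stdGaussian d).map (fun x => ∑ i, x i • hM.eigenvectorBasis i) :=
    map_toLp_stdGaussian.trans (stdGaussian_eq_map_pi_orthonormalBasis hM.eigenvectorBasis)
  refine ⟨by fun_prop, Measurable.aemeasurable (by fun_prop), ?_⟩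
  have hmap := congrArg (Measure.map q) hrot
  rw [Measure.map_map hq.measurable (by fun_prop),
    Measure.map_map hq.measurable hsum.measurable] at hmap
  simpa only [Function.comp_def, q, dotProduct_mulVec_sum_eigenvectorBasis hM] using hmap

theorem trace_mul_self_eq_sum_eigenvalues {𝕜 n : Type*} [RCLike 𝕜] [Fintype n] [DecidableEq n]
    {M : Matrix n n 𝕜} (hM : M.IsHermitian) :
    (M * M).trace = ∑ i, (hM.eigenvalues i : 𝕜) ^ 2 := by
  have hspec : M * M = Unitary.conjStarAlgAut 𝕜 _ hM.eigenvectorUnitary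
      (diagonal (RCLike.ofReal ∘ hM.eigenvalues) * diagonal (RCLike.ofReal ∘ hM.eigenvalues)) := by
    rw [map_mul, ← hM.spectral_theorem]
  rw [hspec, Unitary.conjStarAlgAut_apply, trace_mul_comm, ← mul_assoc, Unitary.coe_star_mul_self,
    one_mul, diagonal_mul_diagonal, trace_diagonal]
  simp only [Function.comp_apply, sq]

theorem memLp_sq_gaussianReal : MemLp (fun x : ℝ => x ^ 2) 2 (gaussianReal 0 1) := by
  refine (memLp_two_iff_integrable_sq (by fun_prop)).2 ?_
  have hint : Integrable (fun x : ℝ => ‖x‖ ^ 4) (gaussianReal 0 1) :=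
    (memLp_id_gaussianReal 4).integrable_norm_pow four_ne_zero
  refine hint.congr (.of_forall fun x => ?_)
  simp only [← pow_mul, Real.norm_eq_abs, Even.pow_abs (by decide : Even 4)]

theorem integral_sq_gaussianReal : ∫ x, x ^ 2 ∂gaussianReal 0 1 = 1 := by
  have hvar : Var[fun x => x; gaussianReal 0 1] = ∫ x, x ^ 2 ∂gaussianReal 0 1 :=
    variance_of_integral_eq_zero aemeasurable_id integral_id_gaussianReal
  rw [← hvar, variance_fun_id_gaussianReal, NNReal.coe_one]

theorem memLp_dotProduct_mulVec_stdGaussian {M : Matrix (Fin d) (Fin d) ℝ} (hM : M.IsHermitian) :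
    MemLp (fun z => z ⬝ᵥ M *ᵥ z) 2 (_root_.stdGaussian d) := by
  refine (identDistrib_dotProduct_mulVec_stdGaussian hM).symm.memLp_snd ?_
  exact memLp_finsetSum _ fun i _ => (memLp_sq_gaussianReal.comp_measurePreserving
    (measurePreserving_eval (fun _ : Fin d => gaussianReal 0 1) i)).const_mul _

theorem integral_dotProduct_mulVec_stdGaussian {M : Matrix (Fin d) (Fin d) ℝ}
    (hM : M.IsHermitian) : ∫ z, z ⬝ᵥ M *ᵥ z ∂_root_.stdGaussian d = M.trace := by
  have hsq (i : Fin d) : ∫ x, x i ^ 2 ∂_root_.stdGaussian d = 1 :=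
    (integral_comp_eval (f := (· ^ 2)) (by fun_prop)).trans integral_sq_gaussianReal
  have hint (i : Fin d) : Integrable (fun x => x i ^ 2) (_root_.stdGaussian d) :=
    integrable_comp_eval (f := (· ^ 2)) (memLp_sq_gaussianReal.integrable one_le_two)
  rw [(identDistrib_dotProduct_mulVec_stdGaussian hM).integral_eq, hM.trace_eq_sum_eigenvalues,
    integral_finsetSum _ fun i _ => (hint i).const_mul _]
  simp only [integral_const_mul, hsq, mul_one, RCLike.ofReal_real_eq_id, id]

theorem variance_dotProduct_mulVec_stdGaussian {M : Matrix (Fin d) (Fin d) ℝ}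
    (hM : M.IsHermitian) : Var[fun z => z ⬝ᵥ M *ᵥ z; _root_.stdGaussian d] =
      Var[fun x => x ^ 2; gaussianReal 0 1] * (M * M).trace := by
  have hsum := variance_sum_pi (μ := fun _ => gaussianReal 0 1)
    (X := fun i x => hM.eigenvalues i * x ^ 2) fun i => memLp_sq_gaussianReal.const_mul _
  simp only [variance_const_mul] at hsum
  rw [(identDistrib_dotProduct_mulVec_stdGaussian hM).variance_eq, _root_.stdGaussian,
    trace_mul_self_eq_sum_eigenvalues hM, ← Finset.sum_fn, hsum, Finset.mul_sum]
  exact Finset.sum_congr rfl fun i _ => mul_comm _ _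

theorem continuous_integral_comp_mul_gaussianReal (g : ℝ →ᵇ ℝ) :
    Continuous fun r => ∫ u, g (r * u) ∂gaussianReal 0 1 :=
  continuous_of_dominated (bound := fun _ => ‖g‖) (fun _ => by fun_prop)
    (fun _ => .of_forall fun _ => g.norm_coe_le_norm _) (integrable_const _)
    (.of_forall fun _ => by fun_prop)

theorem tendstoInDistribution_dotProduct_stdGaussian {ι : Type*} {l : Filter ι} {Ω : ι → Type*}
    [∀ i, MeasurableSpace (Ω i)] {μ : ∀ i, Measure (Ω i)} [∀ i, IsProbabilityMeasure (μ i)]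
    {n : ι → ℕ} {a : ∀ i, Ω i → Fin (n i) → ℝ} (ha : ∀ i, Measurable (a i)) {σ : ℝ}
    (hσ : TendstoInProb μ (fun i x => √(a i x ⬝ᵥ a i x)) l σ) :
    TendstoInDistribution (fun i p => a i p.1 ⬝ᵥ p.2) l (fun u => σ * u)
      (fun i => (μ i).prod (_root_.stdGaussian (n i))) (gaussianReal 0 1) := by
  have hdot (i : ι) : Measurable fun p : Ω i × (Fin (n i) → ℝ) => a i p.1 ⬝ᵥ p.2 := by
    unfold dotProduct
    fun_prop
  refine (tendstoInDistribution_iff_tendsto_integral (fun i => (hdot i).aemeasurable)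
    (by fun_prop)).2 fun g => ?_
  let K : ℝ → ℝ := fun r => ∫ u, g (r * u) ∂gaussianReal 0 1
  have hK : Continuous K := continuous_integral_comp_mul_gaussianReal g
  have hcond (i : ι) (x : Ω i) :
      ∫ z, g (a i x ⬝ᵥ z) ∂_root_.stdGaussian (n i) = K (√(a i x ⬝ᵥ a i x)) := by
    rw [← integral_map (φ := (a i x ⬝ᵥ ·)) (by fun_prop) (by fun_prop),
      map_dotProduct_stdGaussian, integral_map (by fun_prop) (by fun_prop)]
  have hfubini (i : ι) : ∫ x, K (√(a i x ⬝ᵥ a i x)) ∂μ i =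
      ∫ p, g (a i p.1 ⬝ᵥ p.2) ∂(μ i).prod (_root_.stdGaussian (n i)) := by
    rw [integral_prod _ (.of_bound (by fun_prop) ‖g‖ (.of_forall fun p => g.norm_coe_le_norm _))]
    exact integral_congr_ae (.of_forall fun x => (hcond i x).symm)
  refine Tendsto.congr hfubini ((hσ.comp_continuousAt hK.continuousAt).tendsto_integral_of_norm_le
    (C := ‖g‖) (fun i => ?_) fun i x => ?_)
  · have : Measurable fun x => a i x ⬝ᵥ a i x := (hdot i).comp (measurable_id.prodMk (ha i))
    fun_prop
  · simpa using norm_integral_le_of_norm_le_const (μ := gaussianReal 0 1)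
      (.of_forall fun u => g.norm_coe_le_norm (√(a i x ⬝ᵥ a i x) * u))

theorem tendstoInProb_dotProduct_mulVec_sub_trace {ι : Type*} {l : Filter ι} {Ω : ι → Type*}
    [∀ i, MeasurableSpace (Ω i)] {μ : ∀ i, Measure (Ω i)} [∀ i, IsProbabilityMeasure (μ i)]
    {n : ι → ℕ} {M : ∀ i, Ω i → Matrix (Fin (n i)) (Fin (n i)) ℝ}
    (hMm : ∀ i j k, Measurable fun x => M i x j k)
    (hM : ∀ i x, (M i x).IsHermitian)
    (htrace : TendstoInProb μ (fun i x => (M i x * M i x).trace) l 0) :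
    TendstoInProb (fun i => (μ i).prod (_root_.stdGaussian (n i)))
      (fun i p => p.2 ⬝ᵥ M i p.1 *ᵥ p.2 - (M i p.1).trace) l 0 := by
  have hvar := htrace.comp_continuousAt
    (continuous_const_mul Var[fun x => x ^ 2; gaussianReal 0 1]).continuousAt
  simp only [← variance_dotProduct_mulVec_stdGaussian (hM _ _), mul_zero] at hvar
  have hmeas (i : ι) : Measurable
      (Function.uncurry fun (x : Ω i) (z : Fin (n i) → ℝ) => z ⬝ᵥ M i x *ᵥ z) := by
    simp only [dotProduct, mulVec, Function.uncurry_def]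
    fun_prop
  have hconc := tendstoInProb_sub_integral_of_variance hmeas
    (fun i x => memLp_dotProduct_mulVec_stdGaussian (hM i x)) hvar
  simpa only [integral_dotProduct_mulVec_stdGaussian (hM _ _)] using hconc

end StandardGaussian

section SecondOrderTaylor

open Matrix

theorem exists_taylor_two {E : Type*} [NormedAddCommGroup E] [NormedSpace ℝ E] {f : E → ℝ}
    (hf : ContDiff ℝ 2 f) (x v : E) : ∃ t ∈ Set.Ioo (0 : ℝ) 1,
      f (x + v) - f x = fderiv ℝ f x v + fderiv ℝ (fderiv ℝ f) (x + t • v) v v / 2 := by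
  let γ : ℝ → E := fun t => x + t • v
  have hγ (t : ℝ) : HasDerivAt γ v t := by
    simpa only [id, one_smul] using ((hasDerivAt_id t).smul_const v).const_add x
  have hf₁ (t : ℝ) : HasDerivAt (f ∘ γ) (fderiv ℝ f (γ t) v) t :=
    (hf.differentiable two_ne_zero).differentiableAt.hasFDerivAt.comp_hasDerivAt t (hγ t)
  have hdiff : Differentiable ℝ (fderiv ℝ f) :=
    (hf.fderiv_right (m := 1) le_rfl).differentiable one_ne_zero
  have hf₂ (t : ℝ) :
      HasDerivAt (fun t => fderiv ℝ f (γ t) v) (fderiv ℝ (fderiv ℝ f) (γ t) v v) t :=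
    (ContinuousLinearMap.apply ℝ ℝ v).hasFDerivAt.comp_hasDerivAt t
      (hdiff.differentiableAt.hasFDerivAt.comp_hasDerivAt t (hγ t))
  have hderiv : deriv (f ∘ γ) = fun t => fderiv ℝ f (γ t) v := funext fun t => (hf₁ t).deriv
  have hγ_smooth : ContDiff ℝ 2 (f ∘ γ) := hf.comp (by fun_prop)
  obtain ⟨t, ht, htaylor⟩ := taylor_mean_remainder_lagrange_iteratedDeriv (n := 1)
    zero_ne_one (f := f ∘ γ) (by exact_mod_cast hγ_smooth.contDiffOn)
  refine ⟨t, by simpa using ht, ?_⟩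
  have hwithin : derivWithin (f ∘ γ) (Set.uIcc 0 1) 0 = fderiv ℝ f x v := by
    rw [(hf₁ 0).hasDerivWithinAt.derivWithin
      (uniqueDiffOn_uIcc zero_ne_one 0 Set.left_mem_uIcc)]
    simp [γ]
  rw [taylorWithinEval_succ, taylor_within_zero_eval, iteratedDerivWithin_one, hwithin,
    iteratedDeriv_succ, iteratedDeriv_one, hderiv, (hf₂ t).deriv] at htaylor
  have hremainder : f (x + v) - (f x + fderiv ℝ f x v) =
      fderiv ℝ (fderiv ℝ f) (x + t • v) v v / 2 := by
    simpa [γ] using htaylor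
  linarith

theorem le_biSup_of_bddAbove_image {α β : Type*} [ConditionallyCompleteLattice β] {f : α → β}
    {s : Set α} (hf : BddAbove (f '' s)) {a : α} (ha : a ∈ s) : f a ≤ ⨆ t ∈ s, f t :=
  le_ciSup₂ (f := fun t (_ : t ∈ s) => f t)
    (hf.mono (Set.iUnion_subset fun _ => Set.range_subset_iff.2 (Set.mem_image_of_mem f))) a ha

theorem sum_sum_mul_mul_eq_dotProduct_mulVec {n : Type*} [Fintype n] (M : Matrix n n ℝ)
    (z : n → ℝ) : ∑ i, ∑ j, z i * M i j * z j = z ⬝ᵥ M *ᵥ z := by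
  simp only [dotProduct, mulVec, Finset.mul_sum, mul_assoc]

variable {d : ℕ} {L : (Fin d → ℝ) → ℝ}

/-- The gradient `∇L(x)`, as the vector of partial derivatives `∂ᵢL(x)`. -/
noncomputable def partialDerivs (L : (Fin d → ℝ) → ℝ) (x : Fin d → ℝ) : Fin d → ℝ :=
  fun i => fderiv ℝ L x (Pi.single i 1)

theorem partialDerivs_dotProduct_self (x : Fin d → ℝ) :
    partialDerivs L x ⬝ᵥ partialDerivs L x = gradNormSq L x := by
  simp only [partialDerivs, gradNormSq, dotProduct, sq]

theorem fderiv_apply_eq_partialDerivs_dotProduct (x z : Fin d → ℝ) :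
    fderiv ℝ L x z = partialDerivs L x ⬝ᵥ z := by
  conv_lhs => rw [pi_eq_sum_univ' z]
  simp only [map_sum, map_smul, smul_eq_mul, partialDerivs, dotProduct, mul_comm]

theorem continuous_partialDerivs (hL : ContDiff ℝ 1 L) : Continuous (partialDerivs L) :=
  continuous_pi fun _ => (hL.continuous_fderiv one_ne_zero).clm_apply continuous_const

theorem hessian_apply (hL : ContDiff ℝ 2 L) (x : Fin d → ℝ) (i j : Fin d) :
    hessian L x i j = fderiv ℝ (fderiv ℝ L) x (Pi.single i 1) (Pi.single j 1) := by
  have hdiff : Differentiable ℝ (fderiv ℝ L) :=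
    (hL.fderiv_right (m := 1) le_rfl).differentiable one_ne_zero
  rw [hessian, fderiv_clm_apply (hdiff x) (differentiableAt_const _)]
  simp

theorem isHermitian_hessian (hL : ContDiff ℝ 2 L) (x : Fin d → ℝ) :
    (hessian L x).IsHermitian := by
  ext i j
  rw [conjTranspose_apply, star_trivial, hessian_apply hL, hessian_apply hL]
  exact hL.contDiffAt.isSymmSndFDerivAt (by simp) _ _

theorem continuous_hessian (hL : ContDiff ℝ 2 L) : Continuous (hessian L) := by
  have : Continuous (fderiv ℝ (fderiv ℝ L)) :=
    (hL.fderiv_right (m := 1) le_rfl).continuous_fderiv one_ne_zero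
  refine continuous_pi fun i => continuous_pi fun j => ?_
  simp only [hessian_apply hL]
  fun_prop

theorem fderiv_fderiv_apply_eq_dotProduct_hessian_mulVec (hL : ContDiff ℝ 2 L)
    (x z : Fin d → ℝ) : fderiv ℝ (fderiv ℝ L) x z z = z ⬝ᵥ hessian L x *ᵥ z := by
  conv_lhs => rw [pi_eq_sum_univ' z]
  simp only [map_sum, map_smul, _root_.sum_apply, _root_.smul_apply,
    smul_eq_mul, ← hessian_apply hL, ← sum_sum_mul_mul_eq_dotProduct_mulVec, Finset.mul_sum]
  refine Finset.sum_comm.trans ?_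
  exact Finset.sum_congr rfl fun i _ => Finset.sum_congr rfl fun j _ => by ring

theorem exists_taylor_two_hessian (hL : ContDiff ℝ 2 L) (x z : Fin d → ℝ) (c : ℝ) :
    ∃ t ∈ Set.Ioo (0 : ℝ) 1, L (x + c • z) - L x =
      c * (partialDerivs L x ⬝ᵥ z) + c ^ 2 / 2 * (z ⬝ᵥ hessian L (x + (t * c) • z) *ᵥ z) := by
  obtain ⟨t, ht, htaylor⟩ := exists_taylor_two hL x (c • z)
  refine ⟨t, ht, ?_⟩
  rw [htaylor, smul_smul, fderiv_fderiv_apply_eq_dotProduct_hessian_mulVec hL,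
    fderiv_apply_eq_partialDerivs_dotProduct, dotProduct_smul, mulVec_smul, dotProduct_smul,
    smul_dotProduct]
  simp only [smul_eq_mul]
  ring

/-- The largest change of the quadratic form `⟨z, H z⟩ / s²` of the Hessian along the segment from
`x` to `x + (σ / s) z`, which condition (iv) requires to vanish in probability. -/
noncomputable def hessianOscillation (L : (Fin d → ℝ) → ℝ) (σ s : ℝ) (x z : Fin d → ℝ) : ℝ :=
  ⨆ t ∈ Set.Ioo (0 : ℝ) 1,
    |(∑ i, ∑ j, z i * ((hessian L (x + (t * σ / s) • z) - hessian L x) i j) * z j) / s ^ 2|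

theorem hessianOscillation_nonneg (σ s : ℝ) (x z : Fin d → ℝ) :
    0 ≤ hessianOscillation L σ s x z :=
  Real.iSup_nonneg fun _ => Real.iSup_nonneg fun _ => abs_nonneg _

theorem abs_hessian_sub_le_hessianOscillation (hL : ContDiff ℝ 2 L) (σ s : ℝ)
    (x z : Fin d → ℝ) {t : ℝ} (ht : t ∈ Set.Ioo (0 : ℝ) 1) :
    |(z ⬝ᵥ hessian L (x + (t * (σ / s)) • z) *ᵥ z - z ⬝ᵥ hessian L x *ᵥ z) / s ^ 2| ≤
      hessianOscillation L σ s x z := by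
  let q : ℝ → ℝ := fun t => |(∑ i, ∑ j,
    z i * ((hessian L (x + (t * σ / s) • z) - hessian L x) i j) * z j) / s ^ 2|
  have hq : Continuous q := by
    have := continuous_hessian hL
    fun_prop
  have hbdd : BddAbove (q '' Set.Ioo 0 1) :=
    (isCompact_Icc.bddAbove_image hq.continuousOn).mono
      (Set.image_mono Set.Ioo_subset_Icc_self)
  refine le_trans (le_of_eq ?_) (le_biSup_of_bddAbove_image hbdd ht)
  simp only [q, sum_sum_mul_mul_eq_dotProduct_mulVec, sub_mulVec, dotProduct_sub, mul_div_assoc]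

theorem abs_log_ratio_sub_le (hL : ContDiff ℝ 2 L) {s : ℝ} (hs : s ≠ 0) (ℓ : ℝ)
    (x z : Fin d → ℝ) :
    |L (x + (ℓ / s) • z) - L x - (ℓ / s * (partialDerivs L x ⬝ᵥ z) - ℓ ^ 2 / 2)| ≤
      ℓ ^ 2 / 2 * (hessianOscillation L ℓ s x z +
        |(z ⬝ᵥ hessian L x *ᵥ z - (hessian L x).trace) / s ^ 2| +
        |(hessian L x).trace / s ^ 2 + 1|) := by
  obtain ⟨t, ht, htaylor⟩ := exists_taylor_two_hessian hL x z (ℓ / s)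
  set q := z ⬝ᵥ hessian L (x + (t * (ℓ / s)) • z) *ᵥ z
  set q₀ := z ⬝ᵥ hessian L x *ᵥ z
  have hsplit : L (x + (ℓ / s) • z) - L x - (ℓ / s * (partialDerivs L x ⬝ᵥ z) - ℓ ^ 2 / 2) =
      ℓ ^ 2 / 2 * ((q - q₀) / s ^ 2 + (q₀ - (hessian L x).trace) / s ^ 2 +
        ((hessian L x).trace / s ^ 2 + 1)) := by
    rw [htaylor]
    field_simp
    ring
  rw [hsplit, abs_mul, abs_of_nonneg (by positivity)]
  gcongr
  refine (abs_add_three _ _ _).trans ?_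
  gcongr
  exact abs_hessian_sub_le_hessianOscillation hL ℓ s x z ht

end SecondOrderTaylor

section LogRatio

open Matrix

variable {ι : Type*} {l : Filter ι} {n : ι → ℕ} {L : ∀ i, (Fin (n i) → ℝ) → ℝ}
  {μ : ∀ i, Measure (Fin (n i) → ℝ)} [∀ i, IsProbabilityMeasure (μ i)] {s : ι → ℝ} {ℓ : ℝ}

theorem tendstoInDistribution_scaled_partialDerivs_dotProduct (hL : ∀ i, ContDiff ℝ 1 (L i))
    (hs : ∀ i, 0 < s i) (hℓ : 0 ≤ ℓ)
    (hgrad : TendstoInProb μ (fun i x => √(gradNormSq (L i) x) / s i) l 1) :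
    TendstoInDistribution (fun i p => ℓ / s i * (partialDerivs (L i) p.1 ⬝ᵥ p.2)) l (fun u => ℓ * u)
      (fun i => (μ i).prod (_root_.stdGaussian (n i))) (gaussianReal 0 1) := by
  have hnorm (i : ι) (x : Fin (n i) → ℝ) : ℓ * (√(gradNormSq (L i) x) / s i) =
      √(((ℓ / s i) • partialDerivs (L i) x) ⬝ᵥ ((ℓ / s i) • partialDerivs (L i) x)) := by
    rw [smul_dotProduct, dotProduct_smul, partialDerivs_dotProduct_self, smul_smul, smul_eq_mul,
      Real.sqrt_mul (mul_self_nonneg _), Real.sqrt_mul_self (div_nonneg hℓ (hs i).le)]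
    ring
  have hscaled := hgrad.comp_continuousAt (continuous_const_mul ℓ).continuousAt
  simp only [hnorm, mul_one] at hscaled
  simpa only [Pi.smul_apply, smul_dotProduct, smul_eq_mul] using
    tendstoInDistribution_dotProduct_stdGaussian
      (fun i => ((continuous_partialDerivs (hL i)).const_smul (ℓ / s i)).measurable) hscaled

theorem tendstoInProb_scaled_hessian_sub_trace (hL : ∀ i, ContDiff ℝ 2 (L i))
    (htrace : TendstoInProb μ
      (fun i x => (hessian (L i) x * hessian (L i) x).trace / s i ^ 4) l 0) :
    TendstoInProb (fun i => (μ i).prod (_root_.stdGaussian (n i)))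
      (fun i p => (p.2 ⬝ᵥ hessian (L i) p.1 *ᵥ p.2 - (hessian (L i) p.1).trace) / s i ^ 2) l 0 := by
  have hscaled (i : ι) (x : Fin (n i) → ℝ) :
      (((s i ^ 2)⁻¹ • hessian (L i) x) * ((s i ^ 2)⁻¹ • hessian (L i) x)).trace =
        (hessian (L i) x * hessian (L i) x).trace / s i ^ 4 := by
    rw [smul_mul_smul_comm, trace_smul, smul_eq_mul]
    ring
  have hconc := tendstoInProb_dotProduct_mulVec_sub_trace
    (M := fun i x => (s i ^ 2)⁻¹ • hessian (L i) x) (μ := μ) (l := l)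
    (fun i j k => ((continuous_hessian (hL i)).matrix_elem j k).measurable.const_mul _)
    (fun i x => (isHermitian_hessian (hL i) x).smul (star_trivial _))
    (by simpa only [hscaled] using htrace)
  simpa only [smul_mulVec, dotProduct_smul, trace_smul, smul_eq_mul, inv_mul_eq_div,
    sub_div] using hconc

theorem tendstoInProb_log_ratio_sub_linear (hL : ∀ i, ContDiff ℝ 2 (L i)) (hs : ∀ i, 0 < s i)
    (hlap : TendstoInProb μ (fun i x => (hessian (L i) x).trace / s i ^ 2) l (-1))
    (htrace : TendstoInProb μ
      (fun i x => (hessian (L i) x * hessian (L i) x).trace / s i ^ 4) l 0)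
    (hosc : TendstoInProb (fun i => (μ i).prod (_root_.stdGaussian (n i)))
      (fun i p => hessianOscillation (L i) ℓ (s i) p.1 p.2) l 0) :
    TendstoInProb (fun i => (μ i).prod (_root_.stdGaussian (n i)))
      (fun i p => dist (L i (p.1 + (ℓ / s i) • p.2) - L i p.1)
        (ℓ / s i * (partialDerivs (L i) p.1 ⬝ᵥ p.2) - ℓ ^ 2 / 2)) l 0 := by
  have hquad := (tendstoInProb_scaled_hessian_sub_trace hL htrace).comp_continuousAt
    continuous_abs.continuousAt
  have hlap' := (hlap.comp_fst fun i => _root_.stdGaussian (n i)).comp_continuousAt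
    (g := fun r => |r + 1|) (by fun_prop)
  have hsum := ((hosc.add hquad).add hlap').comp_continuousAt
    (continuous_const_mul (ℓ ^ 2 / 2)).continuousAt
  rw [abs_zero, add_zero, neg_add_cancel, abs_zero, add_zero, mul_zero] at hsum
  refine hsum.of_dist_le fun i p => ?_
  rw [dist_zero_right, dist_zero_right, Real.norm_of_nonneg dist_nonneg, Real.dist_eq]
  exact (abs_log_ratio_sub_le (hL i) (hs i).ne' ℓ p.1 p.2).trans (le_abs_self _)

theorem tendstoInDistribution_log_ratio [l.IsCountablyGenerated] (hL : ∀ i, ContDiff ℝ 2 (L i))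
    (hs : ∀ i, 0 < s i) (hℓ : 0 ≤ ℓ)
    (hgrad : TendstoInProb μ (fun i x => √(gradNormSq (L i) x) / s i) l 1)
    (hlap : TendstoInProb μ (fun i x => (hessian (L i) x).trace / s i ^ 2) l (-1))
    (htrace : TendstoInProb μ
      (fun i x => (hessian (L i) x * hessian (L i) x).trace / s i ^ 4) l 0)
    (hosc : TendstoInProb (fun i => (μ i).prod (_root_.stdGaussian (n i)))
      (fun i p => hessianOscillation (L i) ℓ (s i) p.1 p.2) l 0) :
    TendstoInDistribution (fun i p => L i (p.1 + (ℓ / s i) • p.2) - L i p.1) l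
      (fun u => ℓ * u - ℓ ^ 2 / 2) (fun i => (μ i).prod (_root_.stdGaussian (n i)))
      (gaussianReal 0 1) := by
  have hlinear := (tendstoInDistribution_scaled_partialDerivs_dotProduct
    (fun i => (hL i).of_le one_le_two) hs hℓ hgrad).continuous_comp (g := (· - ℓ ^ 2 / 2))
    (by fun_prop)
  refine tendstoInDistribution_of_tendstoInProb_dist hlinear (fun i => ?_)
    (tendstoInProb_log_ratio_sub_linear hL hs hlap htrace hosc)
  have := (hL i).continuous
  fun_prop

end LogRatio

section DetailedBalance

open scoped ENNReal

/-- Detailed balance for the law `μ` of a log acceptance ratio `T`: the law of `-T` has density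
`exp` with respect to the law of `T`. For a law with Lebesgue density `ρ` this says
`ρ(b) = e^{-b} ρ(-b)`. -/
def IsLogBalanced (μ : Measure ℝ) : Prop :=
  μ.map (fun x => -x) = μ.withDensity fun x => ENNReal.ofReal (exp x)

variable {μ ν : Measure ℝ}

theorem isLogBalanced_iff_lintegral : IsLogBalanced μ ↔ ∀ f : ℝ → ℝ≥0∞, Measurable f →
    ∫⁻ x, f (-x) ∂μ = ∫⁻ x, ENNReal.ofReal (exp x) * f x ∂μ := by
  have hmap (f : ℝ → ℝ≥0∞) (hf : Measurable f) :
      ∫⁻ x, f x ∂μ.map (fun x => -x) = ∫⁻ x, f (-x) ∂μ := lintegral_map hf measurable_neg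
  have hdens (f : ℝ → ℝ≥0∞) (hf : Measurable f) :
      ∫⁻ x, f x ∂μ.withDensity (fun x => ENNReal.ofReal (exp x)) =
        ∫⁻ x, ENNReal.ofReal (exp x) * f x ∂μ :=
    lintegral_withDensity_eq_lintegral_mul _ (by fun_prop) hf
  refine ⟨fun h f hf => ?_, fun h => Measure.ext_of_lintegral _ fun f hf => ?_⟩
  · rw [← hmap f hf, ← hdens f hf, h]
  · rw [hmap f hf, hdens f hf, h f hf]

theorem isLogBalanced_withDensity {ρ : ℝ → ℝ} (hρ : Measurable ρ)
    (hsymm : ∀ b, ρ b = exp (-b) * ρ (-b)) :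
    IsLogBalanced (volume.withDensity fun b => ENNReal.ofReal (ρ b)) := by
  refine isLogBalanced_iff_lintegral.2 fun f hf => ?_
  rw [lintegral_withDensity_eq_lintegral_mul _ (by fun_prop) (by fun_prop),
    lintegral_withDensity_eq_lintegral_mul _ (by fun_prop) (by fun_prop),
    ← lintegral_neg_eq_self]
  refine lintegral_congr fun b => ?_
  simp only [Pi.mul_apply, neg_neg]
  rw [hsymm (-b), neg_neg, ENNReal.ofReal_mul (exp_pos b).le, mul_comm (ENNReal.ofReal (exp b)),
    mul_assoc]

theorem isLogBalanced_gaussianReal {v : NNReal} (hv : v ≠ 0) :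
    IsLogBalanced (gaussianReal (-v / 2) v) := by
  rw [gaussianReal_of_var_ne_zero _ hv]
  refine isLogBalanced_withDensity (measurable_gaussianPDFReal _ _) fun b => ?_
  have hv' : (v : ℝ) ≠ 0 := NNReal.coe_ne_zero.2 hv
  rw [gaussianPDFReal, gaussianPDFReal, mul_left_comm, ← Real.exp_add]
  congr 2
  field_simp
  ring

theorem IsLogBalanced.conv [SFinite ν] (hμ : IsLogBalanced μ) (hν : IsLogBalanced ν) :
    IsLogBalanced (μ ∗ ν) := by
  rw [isLogBalanced_iff_lintegral] at hμ hν ⊢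
  intro f hf
  calc ∫⁻ t, f (-t) ∂(μ ∗ ν) = ∫⁻ x, ∫⁻ y, f (-x + -y) ∂ν ∂μ := by
        rw [Measure.lintegral_conv (by fun_prop)]
        simp only [neg_add]
    _ = ∫⁻ x, ∫⁻ y, ENNReal.ofReal (exp y) * f (-x + y) ∂ν ∂μ :=
        lintegral_congr fun x => hν (fun y => f (-x + y)) (by fun_prop)
    _ = ∫⁻ x, ENNReal.ofReal (exp x) * ∫⁻ y, ENNReal.ofReal (exp y) * f (x + y) ∂ν ∂μ :=
        hμ (fun x => ∫⁻ y, ENNReal.ofReal (exp y) * f (x + y) ∂ν)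
          (Measurable.lintegral_prod_right (by fun_prop))
    _ = ∫⁻ t, ENNReal.ofReal (exp t) * f t ∂(μ ∗ ν) := by
        rw [Measure.lintegral_conv (by fun_prop)]
        refine lintegral_congr fun x => ?_
        rw [← lintegral_const_mul _ (by fun_prop)]
        refine lintegral_congr fun y => ?_
        rw [Real.exp_add, ENNReal.ofReal_mul (exp_pos x).le, mul_assoc]

theorem IsLogBalanced.lintegral_min_one_exp (hμ : IsLogBalanced μ) :
    ∫⁻ t, ENNReal.ofReal (min 1 (exp t)) ∂μ = μ (Set.Ici 0) + μ (Set.Ioi 0) := by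
  have hsplit (t : ℝ) : ENNReal.ofReal (min 1 (exp t)) = (Set.Ici (0 : ℝ)).indicator 1 t +
      ENNReal.ofReal (exp t) * (Set.Iio (0 : ℝ)).indicator 1 t := by
    rcases le_or_gt 0 t with ht | ht
    · simp [ht, ht.not_gt, Real.one_le_exp ht]
    · simp [ht, ht.not_ge, ht.le]
  have hreflect := isLogBalanced_iff_lintegral.1 hμ ((Set.Iio (0 : ℝ)).indicator 1)
    (measurable_one.indicator measurableSet_Iio)
  have hneg (t : ℝ) : (Set.Iio (0 : ℝ)).indicator (1 : ℝ → ℝ≥0∞) (-t) =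
      (Set.Ioi (0 : ℝ)).indicator 1 t := by
    simp only [Set.indicator, Set.mem_Iio, Set.mem_Ioi, neg_lt_zero, Pi.one_apply]
  simp only [hsplit]
  rw [lintegral_add_left (measurable_one.indicator measurableSet_Ici), ← hreflect]
  simp only [hneg]
  rw [lintegral_indicator_one measurableSet_Ici, lintegral_indicator_one measurableSet_Ioi]

theorem IsLogBalanced.integral_min_one_exp [NullSingletonClass μ] (hμ : IsLogBalanced μ) :
    ∫ t, min 1 (exp t) ∂μ = 2 * μ.real (Set.Ici 0) := by
  rw [integral_eq_lintegral_of_nonneg_ae (.of_forall fun t => by positivity) (by fun_prop),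
    hμ.lintegral_min_one_exp, measure_congr Ioi_ae_eq_Ici, ← two_mul, ENNReal.toReal_mul,
    ENNReal.toReal_ofNat, measureReal_def]

theorem conv_apply {G : Type*} [AddMonoid G] [MeasurableSpace G] [MeasurableAdd₂ G]
    {μ ν : Measure G} [SFinite μ] [SFinite ν] {s : Set G} (hs : MeasurableSet s) :
    (μ ∗ ν) s = ∫⁻ y, μ ((· + y) ⁻¹' s) ∂ν := by
  rw [Measure.conv, Measure.map_apply measurable_add hs,
    Measure.prod_apply_symm (measurable_add hs)]
  rfl

instance {G : Type*} [AddGroup G] [MeasurableSpace G] [MeasurableAdd₂ G]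
    [MeasurableSingletonClass G] {μ ν : Measure G} [SFinite μ] [SFinite ν] [NullSingletonClass μ] :
    NullSingletonClass (μ ∗ ν) := by
  refine ⟨fun t => ?_⟩
  rw [conv_apply (measurableSet_singleton t)]
  simp

theorem stdNormalCDF_eq_real_Iic (x : ℝ) :
    stdNormalCDF x = (gaussianReal 0 1).real (Set.Iic x) := by
  rw [measureReal_def, gaussianReal_apply_eq_integral _ one_ne_zero, ENNReal.toReal_ofReal
    (setIntegral_nonneg measurableSet_Iic fun t _ => gaussianPDFReal_nonneg _ _ t)]
  simp [stdNormalCDF, gaussianPDFReal, div_eq_inv_mul]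

theorem map_mul_sub_gaussianReal (ℓ : ℝ) :
    (gaussianReal 0 1).map (fun u => ℓ * u - ℓ ^ 2 / 2) =
      gaussianReal (-(ℓ ^ 2).toNNReal / 2) (ℓ ^ 2).toNNReal := by
  have hcomp : (fun u => ℓ * u - ℓ ^ 2 / 2) = (· - ℓ ^ 2 / 2) ∘ (ℓ * ·) := rfl
  rw [hcomp, ← Measure.map_map (by fun_prop) (by fun_prop), gaussianReal_map_const_mul,
    gaussianReal_map_sub_const, mul_zero, zero_sub, mul_one,
    Real.coe_toNNReal _ (sq_nonneg ℓ), Real.toNNReal_of_nonneg (sq_nonneg ℓ), neg_div]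

theorem gaussianReal_map_mul_sub_real_Ici_neg {ℓ : ℝ} (hℓ : 0 < ℓ) (b : ℝ) :
    ((gaussianReal 0 1).map (fun u => ℓ * u - ℓ ^ 2 / 2)).real (Set.Ici (-b)) =
      stdNormalCDF (b / ℓ - ℓ / 2) := by
  have hpre : (fun u => ℓ * u - ℓ ^ 2 / 2) ⁻¹' Set.Ici (-b) =
      (fun u => -u) ⁻¹' Set.Iic (b / ℓ - ℓ / 2) := by
    ext u
    have hdiv : b / ℓ - ℓ / 2 = (b - ℓ ^ 2 / 2) / ℓ := by field_simp
    rw [Set.mem_preimage, Set.mem_preimage, Set.mem_Ici, Set.mem_Iic, hdiv, le_div_iff₀ hℓ]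
    constructor <;> intro h <;> linarith
  have hsymm : (gaussianReal 0 1).map (fun u => -u) = gaussianReal 0 1 := by
    rw [gaussianReal_map_neg, neg_zero]
  rw [map_measureReal_apply (by fun_prop) measurableSet_Ici, hpre,
    ← map_measureReal_apply measurable_neg measurableSet_Iic, hsymm, stdNormalCDF_eq_real_Iic]

theorem stdNormalCDF_nonneg (x : ℝ) : 0 ≤ stdNormalCDF x :=
  (stdNormalCDF_eq_real_Iic x).symm ▸ measureReal_nonneg

theorem measurable_stdNormalCDF : Measurable stdNormalCDF := by
  refine Monotone.measurable fun x y hxy => ?_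
  rw [stdNormalCDF_eq_real_Iic, stdNormalCDF_eq_real_Iic]
  exact measureReal_mono (Set.Iic_subset_Iic.2 hxy)

theorem norm_min_one_exp_le (t : ℝ) : ‖min 1 (exp t)‖ ≤ 1 := by
  rw [Real.norm_of_nonneg (by positivity)]
  exact min_le_left _ _

theorem continuous_integral_min_one_exp_add (μ : Measure ℝ) [IsFiniteMeasure μ] :
    Continuous fun w => ∫ b, min 1 (exp (w + b)) ∂μ :=
  continuous_of_dominated (bound := fun _ => 1) (fun _ => by fun_prop)
    (fun _ => .of_forall fun _ => norm_min_one_exp_le _) (integrable_const _)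
    (.of_forall fun _ => by fun_prop)

theorem norm_integral_min_one_exp_add_le (μ : Measure ℝ) [IsProbabilityMeasure μ] (w : ℝ) :
    ‖∫ b, min 1 (exp (w + b)) ∂μ‖ ≤ 1 :=
  (norm_integral_le_of_norm_le_const (.of_forall fun _ => norm_min_one_exp_le _)).trans_eq
    (by rw [probReal_univ, mul_one])

theorem integral_integral_min_one_exp_gaussianReal [IsProbabilityMeasure μ]
    (hμ : IsLogBalanced μ) {ℓ : ℝ} (hℓ : 0 < ℓ) :
    ∫ u, ∫ b, min 1 (exp (ℓ * u - ℓ ^ 2 / 2 + b)) ∂μ ∂gaussianReal 0 1 =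
      2 * ∫ b, stdNormalCDF (b / ℓ - ℓ / 2) ∂μ := by
  have hv : (ℓ ^ 2).toNNReal ≠ 0 := (Real.toNNReal_pos.2 (by positivity)).ne'
  let γ := (gaussianReal 0 1).map (fun u => ℓ * u - ℓ ^ 2 / 2)
  have hγ : γ = gaussianReal (-(ℓ ^ 2).toNNReal / 2) (ℓ ^ 2).toNNReal :=
    map_mul_sub_gaussianReal ℓ
  have : IsProbabilityMeasure γ := hγ ▸ inferInstance
  have : NullSingletonClass γ := hγ ▸ nullSingletonClass_gaussianReal hv
  have hbal : IsLogBalanced (γ ∗ μ) := (hγ ▸ isLogBalanced_gaussianReal hv).conv hμ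
  have hint : Integrable (fun t => min 1 (exp t)) (γ ∗ μ) :=
    .of_bound (by fun_prop) 1 (.of_forall norm_min_one_exp_le)
  have hmeas (b : ℝ) : γ ((· + b) ⁻¹' Set.Ici 0) =
      ENNReal.ofReal (stdNormalCDF (b / ℓ - ℓ / 2)) := by
    rw [Set.preimage_add_const_Ici, zero_sub, ← gaussianReal_map_mul_sub_real_Ici_neg hℓ,
      ofReal_measureReal]
  calc ∫ u, ∫ b, min 1 (exp (ℓ * u - ℓ ^ 2 / 2 + b)) ∂μ ∂gaussianReal 0 1
      = ∫ w, ∫ b, min 1 (exp (w + b)) ∂μ ∂γ :=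
        (integral_map (by fun_prop)
          (continuous_integral_min_one_exp_add μ).aestronglyMeasurable).symm
    _ = ∫ t, min 1 (exp t) ∂(γ ∗ μ) := (integral_conv hint).symm
    _ = 2 * (γ ∗ μ).real (Set.Ici 0) := hbal.integral_min_one_exp
    _ = 2 * ∫ b, stdNormalCDF (b / ℓ - ℓ / 2) ∂μ := by
        rw [measureReal_def, conv_apply measurableSet_Ici, integral_eq_lintegral_of_nonneg_ae
          (.of_forall fun b => stdNormalCDF_nonneg _)
          (measurable_stdNormalCDF.comp (by fun_prop)).aestronglyMeasurable]
        simp only [hmeas]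

end DetailedBalance

theorem stmt3_general {ι : Type*} {l : Filter ι} [l.IsCountablyGenerated] {n : ι → ℕ}
    {L : ∀ i, (Fin (n i) → ℝ) → ℝ} (hL : ∀ i, ContDiff ℝ 2 (L i))
    {μX : ∀ i, Measure (Fin (n i) → ℝ)} [∀ i, IsProbabilityMeasure (μX i)]
    {μB : Measure ℝ} [IsProbabilityMeasure μB] (hB : IsLogBalanced μB)
    {s : ι → ℝ} (hs : ∀ i, 0 < s i) {ℓ : ℝ} (hℓ : 0 < ℓ)
    (hgrad : TendstoInProb μX (fun i x => √(gradNormSq (L i) x) / s i) l 1)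
    (hlap : TendstoInProb μX (fun i x => (hessian (L i) x).trace / s i ^ 2) l (-1))
    (htrace : TendstoInProb μX
      (fun i x => (hessian (L i) x * hessian (L i) x).trace / s i ^ 4) l 0)
    (hosc : TendstoInProb (fun i => (μX i).prod (_root_.stdGaussian (n i)))
      (fun i p => hessianOscillation (L i) ℓ (s i) p.1 p.2) l 0) :
    Tendsto (fun i => ∫ p, min 1 (exp (L i (p.1.1 + (ℓ / s i) • p.1.2) - L i p.1.1 + p.2))
        ∂((μX i).prod (_root_.stdGaussian (n i))).prod μB) l
      (𝓝 (2 * ∫ b, stdNormalCDF (b / ℓ - ℓ / 2) ∂μB)) := by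
  let accept : BoundedContinuousFunction ℝ ℝ := .ofNormedAddCommGroup
    (fun w => ∫ b, min 1 (exp (w + b)) ∂μB) (continuous_integral_min_one_exp_add μB) 1
    (norm_integral_min_one_exp_add_le μB)
  have hclt := tendstoInDistribution_log_ratio hL hs hℓ.le hgrad hlap htrace hosc
  have hlim := (tendstoInDistribution_iff_tendsto_integral hclt.forall_aemeasurable
    hclt.aemeasurable_limit).1 hclt accept
  have hint (i : ι) : Integrable
      (fun p => min 1 (exp (L i (p.1.1 + (ℓ / s i) • p.1.2) - L i p.1.1 + p.2)))
      (((μX i).prod (_root_.stdGaussian (n i))).prod μB) := by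
    have := (hL i).continuous
    exact .of_bound (by fun_prop) 1 (.of_forall fun p => norm_min_one_exp_le _)
  rw [← integral_integral_min_one_exp_gaussianReal hB hℓ]
  exact hlim.congr fun i => (integral_prod _ (hint i)).symm

/-- Theorem 1, part 1: limiting acceptance probability of the
pseudo-marginal random walk Metropolis.  Under conditions (i)–(iv) on the targets
`pden^(d)` with scalings `s^(d)`, with `λ^(d) = ℓ/s^(d)` and noise difference `B` whose
density satisfies `ρ(b) = e^{−b} ρ(−b)`, the mean acceptance probability
`E[min(1, exp(L^(d)(X + λZ) − L^(d)(X) + B))]` converges to `2 E[Φ(B/ℓ − ℓ/2)]`. -/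
theorem stmt3
    (pden : (d : ℕ) → (Fin d → ℝ) → ℝ) (hπ_pos : ∀ d x, 0 < pden d x)
    (L : (d : ℕ) → (Fin d → ℝ) → ℝ)
    (hL : ∀ d, L d = fun x => Real.log (pden d x))
    (hL_smooth : ∀ d, ContDiff ℝ 2 (L d))
    (μX : (d : ℕ) → Measure (Fin d → ℝ))
    (hμX : ∀ d, μX d = volume.withDensity fun x => ENNReal.ofReal (pden d x))
    (hμX_prob : ∀ d, IsProbabilityMeasure (μX d))
    (ρ : ℝ → ℝ) (hρ_meas : Measurable ρ) (hρ_nonneg : ∀ b, 0 ≤ ρ b)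
    (μB : Measure ℝ)
    (hμB : μB = volume.withDensity fun b => ENNReal.ofReal (ρ b))
    (hμB_prob : IsProbabilityMeasure μB)
    (hρ_sym : ∀ b, ρ b = Real.exp (-b) * ρ (-b))
    (s : ℕ → ℝ) (hs_pos : ∀ d, 0 < s d)
    -- (i) ‖∇L^(d)(X)‖ / s^(d) → 1 in probability
    (hgrad : ∀ ε > (0 : ℝ), Tendsto (fun d =>
      μX d {x | ε < |Real.sqrt (gradNormSq (L d) x) / s d - 1|}) atTop (𝓝 0))
    -- (ii) ΔL^(d)(X) / (s^(d))² → −1 in probability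
    (hlap : ∀ ε > (0 : ℝ), Tendsto (fun d =>
      μX d {x | ε < |Matrix.trace (hessian (L d) x) / (s d) ^ 2 + 1|}) atTop (𝓝 0))
    -- (iii) Trace[(H^(d)(X))²] / (s^(d))⁴ → 0 in probability
    (htrace : ∀ ε > (0 : ℝ), Tendsto (fun d =>
      μX d {x | ε < |Matrix.trace (hessian (L d) x * hessian (L d) x) / (s d) ^ 4|})
      atTop (𝓝 0))
    -- (iv) regularity of the Hessian
    (hhess_reg : ∀ σ > (0 : ℝ), ∀ ε > (0 : ℝ), Tendsto (fun d =>
      ((μX d).prod (stdGaussian d)) {p | ε < ⨆ t ∈ Set.Ioo (0 : ℝ) 1,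
        |(∑ i, ∑ j, p.2 i *
            ((hessian (L d) (p.1 + (t * σ / s d) • p.2) - hessian (L d) p.1) i j) * p.2 j)
          / (s d) ^ 2|}) atTop (𝓝 0))
    (ℓ : ℝ) (hℓ : 0 < ℓ) (lam : ℕ → ℝ) (hlam : ∀ d, lam d = ℓ / s d) :
    Tendsto (fun d => ∫ p : ((Fin d → ℝ) × (Fin d → ℝ)) × ℝ,
        min 1 (Real.exp (L d (p.1.1 + lam d • p.1.2) - L d p.1.1 + p.2))
        ∂(((μX d).prod (stdGaussian d)).prod μB))
      atTop (𝓝 (2 * ∫ b, stdNormalCDF (b / ℓ - ℓ / 2) ∂μB)) := by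
  obtain rfl : lam = fun d => ℓ / s d := funext hlam
  subst hμB
  exact stmt3_general hL_smooth (isLogBalanced_withDensity hρ_meas hρ_sym) hs_pos hℓ hgrad
    (by simpa only [TendstoInProb, Real.dist_eq, sub_neg_eq_add] using hlap)
    (by simpa only [TendstoInProb, Real.dist_0_eq_abs] using htrace)
    ((tendstoInProb_zero_iff_of_nonneg fun d p => hessianOscillation_nonneg ..).2
      (hhess_reg ℓ hℓ))
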